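/- Let S ⊆ ℝⁿ be a convex set, let D be a map from S to real symmetric positive definite n×n matrices satisfying the self-concordance inequality on S, and let r : ℝⁿ → ℝⁿ be differentiable on S with Fréchet derivative D(z) at each z ∈ S. Let y ∈ S, set n(y) := −D(y)⁻¹ r(y), y⁺ := y + n(y), and n(y⁺) := −D(y⁺)⁻¹ r(y⁺). If ‖n(y)‖_{D(y)} ≤ 1/4 and the segment [y, y⁺] is contained in S, then ‖n(y⁺)‖_{D(y⁺)} ≤ 1/9. -/

import Mathlib

open Matrix

/-- The Hessian norm `‖z‖_H = √(zᵀ H z)` associated with a matrix `H`. -/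
noncomputable def hnorm {ι : Type*} [Fintype ι] (H : Matrix ι ι ℝ) (z : ι → ℝ) : ℝ :=
  Real.sqrt (z ⬝ᵥ H.mulVec z)

/-- A matrix-valued map `D` satisfies the self-concordance inequality on `S`. -/
def SelfConcordantOn {n : ℕ} (S : Set (Fin n → ℝ))
    (D : (Fin n → ℝ) → Matrix (Fin n) (Fin n) ℝ) : Prop :=
  ∀ y₁ ∈ S, ∀ y₂ ∈ S, hnorm (D y₁) (y₂ - y₁) < 1 →
    ∀ v : Fin n → ℝ, hnorm (D y₂) v ≤ hnorm (D y₁) v / (1 - hnorm (D y₁) (y₂ - y₁))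

/-!
Write `δ = ‖n(y)‖_{D y}` and `z = y + n(y)`. Self-concordance at `y` only bounds `‖·‖_{D z}`
from above. Subdividing the segment and stepping backwards from `z` to `y`, the one-step estimates
telescope to the matching lower bound `(1 - δ) ‖v‖_{D y} ≤ ‖v‖_{D z}`. Along the segment, the two
bounds control the quadratic form of `D (y + t n(y)) - D y`, hence by polarization the derivative
of the error of the linear approximation to `r` at `y`. That approximation vanishes at `z` by the
choice of `n(y)`, so integrating gives `w ⬝ᵥ r z ≤ ‖w‖_{D y} δ² / (1 - δ)` for all `w`. With
`w = -n(z)` the left side is `‖n(z)‖²_{D z}`, and the lower bound again gives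
`‖n(z)‖_{D z} ≤ (δ / (1 - δ))²`.
-/

section HessianNorm

variable {ι : Type*} [Fintype ι] {H M : Matrix ι ι ℝ}

lemma hnorm_nonneg (H : Matrix ι ι ℝ) (v : ι → ℝ) : 0 ≤ hnorm H v :=
  Real.sqrt_nonneg _

lemma hnorm_smul (H : Matrix ι ι ℝ) (a : ℝ) (v : ι → ℝ) : hnorm H (a • v) = |a| * hnorm H v := by
  have form_smul : (a • v) ⬝ᵥ H *ᵥ (a • v) = a ^ 2 * (v ⬝ᵥ H *ᵥ v) := by
    simp only [mulVec_smul, smul_dotProduct, dotProduct_smul, smul_eq_mul]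
    ring
  rw [hnorm, form_smul, Real.sqrt_mul (sq_nonneg a), Real.sqrt_sq_eq_abs, hnorm]

lemma hnorm_smul_of_nonneg (H : Matrix ι ι ℝ) {a : ℝ} (ha : 0 ≤ a) (v : ι → ℝ) :
    hnorm H (a • v) = a * hnorm H v := by
  rw [hnorm_smul, abs_of_nonneg ha]

lemma hnorm_neg (H : Matrix ι ι ℝ) (v : ι → ℝ) : hnorm H (-v) = hnorm H v := by
  simpa using hnorm_smul H (-1) v

lemma hnorm_sq (hH : H.PosSemidef) (v : ι → ℝ) : hnorm H v ^ 2 = v ⬝ᵥ H *ᵥ v :=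
  Real.sq_sqrt (by simpa using hH.dotProduct_mulVec_nonneg v)

lemma hnorm_pos (hH : H.PosDef) {v : ι → ℝ} (hv : v ≠ 0) : 0 < hnorm H v :=
  Real.sqrt_pos.2 (by simpa using hH.dotProduct_mulVec_pos hv)

lemma hnorm_add_sq_add_hnorm_sub_sq (hH : H.PosSemidef) (u v : ι → ℝ) :
    hnorm H (u + v) ^ 2 + hnorm H (u - v) ^ 2 = 2 * (hnorm H u ^ 2 + hnorm H v ^ 2) := by
  simp only [hnorm_sq hH, mulVec_add, mulVec_sub, add_dotProduct, sub_dotProduct, dotProduct_add,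
    dotProduct_sub]
  ring

lemma dotProduct_mulVec_polarization (hM : M.IsSymm) (u v : ι → ℝ) :
    4 * (u ⬝ᵥ M *ᵥ v) = (u + v) ⬝ᵥ M *ᵥ (u + v) - (u - v) ⬝ᵥ M *ᵥ (u - v) := by
  have symm : v ⬝ᵥ M *ᵥ u = u ⬝ᵥ M *ᵥ v := by
    rw [dotProduct_mulVec, ← mulVec_transpose, hM.eq, dotProduct_comm]
  simp only [mulVec_add, mulVec_sub, add_dotProduct, sub_dotProduct, dotProduct_add,
    dotProduct_sub, symm]
  ring

lemma dotProduct_mulVec_le_of_abs_le (hH : H.PosDef) (hM : M.IsSymm) {c : ℝ}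
    (hc : ∀ v, |v ⬝ᵥ M *ᵥ v| ≤ c * hnorm H v ^ 2) (u v : ι → ℝ) :
    u ⬝ᵥ M *ᵥ v ≤ c * (hnorm H u * hnorm H v) := by
  rcases eq_or_ne u 0 with rfl | hu
  · simp [hnorm]
  rcases eq_or_ne v 0 with rfl | hv
  · simp [hnorm]
  set a := hnorm H u with ha
  set b := hnorm H v with hb
  have ha_pos : 0 < a := hnorm_pos hH hu
  have hb_pos : 0 < b := hnorm_pos hH hv
  -- Polarize at `b • u` and `a • v`, which have the same norm `a * b`.
  refine le_of_mul_le_mul_left ?_ (by positivity : 0 < 4 * (b * a))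
  calc 4 * (b * a) * (u ⬝ᵥ M *ᵥ v)
      = 4 * ((b • u) ⬝ᵥ M *ᵥ (a • v)) := by
        simp only [mulVec_smul, smul_dotProduct, dotProduct_smul, smul_eq_mul]
        ring
    _ ≤ c * hnorm H (b • u + a • v) ^ 2 + c * hnorm H (b • u - a • v) ^ 2 := by
        rw [dotProduct_mulVec_polarization hM]
        linarith [(abs_le.1 (hc (b • u + a • v))).2, (abs_le.1 (hc (b • u - a • v))).1]
    _ = 4 * (b * a) * (c * (a * b)) := by
        rw [← mul_add, hnorm_add_sq_add_hnorm_sub_sq hH.posSemidef,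
          hnorm_smul_of_nonneg _ hb_pos.le, hnorm_smul_of_nonneg _ ha_pos.le, ← ha, ← hb]
        ring

end HessianNorm

lemma add_smul_mem_of_segment_subset {E : Type*} [AddCommGroup E] [Module ℝ E] {S : Set E}
    {x d : E} (hseg : segment ℝ x (x + d) ⊆ S) {t : ℝ} (ht : t ∈ Set.Icc (0 : ℝ) 1) :
    x + t • d ∈ S :=
  hseg (segment_eq_image' ℝ x (x + d) ▸ ⟨t, ht, by simp⟩)

lemma segment_add_smul_subset {E : Type*} [AddCommGroup E] [Module ℝ E] {S : Set E}
    {x d : E} (hseg : segment ℝ x (x + d) ⊆ S) {t : ℝ} (ht : t ∈ Set.Icc (0 : ℝ) 1) :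
    segment ℝ x (x + t • d) ⊆ S :=
  ((convex_segment x (x + d)).segment_subset (left_mem_segment ℝ x (x + d))
    (add_smul_mem_of_segment_subset subset_rfl ht)).trans hseg

lemma two_le_add_one_div {a : ℝ} (ha : 0 < a) : 2 ≤ a + 1 / a := by
  have h_eq : a + 1 / a - 2 = (a - 1) ^ 2 / a := by
    field_simp
    ring
  rw [← sub_nonneg, h_eq]
  positivity

lemma mul_le_mul_of_forall_mul_succ_le {f a : ℕ → ℝ} {N : ℕ} (ha : ∀ k ≤ N, 0 < a k)
    (hf : ∀ k < N, f k * a (k + 1) ≤ f (k + 1) * a k) :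
    f 0 * a N ≤ f N * a 0 := by
  suffices ∀ k ≤ N, f 0 / a 0 ≤ f k / a k by
    simpa only [div_le_div_iff₀ (ha 0 N.zero_le) (ha N le_rfl)] using this N le_rfl
  intro k hk
  induction k with
  | zero => rfl
  | succ k ih =>
    refine (ih (by lia)).trans ?_
    rw [div_le_div_iff₀ (ha k (by lia)) (ha (k + 1) hk)]
    exact hf k hk

lemma mul_one_sub_le_of_backward_step {f : ℝ → ℝ} {δ : ℝ} (hδ₀ : 0 ≤ δ) (hδ₁ : δ < 1)
    (hf : ∀ s t, 0 ≤ s → s ≤ t → t ≤ 1 → (2 * t - s) * δ < 1 →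
      f s * (1 - (2 * t - s) * δ) ≤ f t * (1 - t * δ)) :
    f 0 * (1 - δ) ≤ f 1 := by
  have h_tendsto : Filter.Tendsto (fun N : ℕ ↦ 1 / ((N : ℝ) + 1)) Filter.atTop (nhds 0) :=
    tendsto_one_div_add_atTop_nhds_zero_nat
  have h_left : Filter.Tendsto (fun N : ℕ ↦ f 0 * (1 - (1 + 1 / ((N : ℝ) + 1)) * δ)) Filter.atTop
      (nhds (f 0 * (1 - δ))) := by
    simpa using (((h_tendsto.const_add 1).mul_const δ).const_sub 1).const_mul (f 0)
  have h_right : Filter.Tendsto (fun N : ℕ ↦ f 1 * (1 - 1 / ((N : ℝ) + 1) * δ)) Filter.atTop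
      (nhds (f 1)) := by
    simpa using ((h_tendsto.mul_const δ).const_sub 1).const_mul (f 1)
  have h_small : ∀ᶠ N : ℕ in Filter.atTop, (1 + 1 / ((N : ℝ) + 1)) * δ < 1 :=
    ((h_tendsto.const_add 1).mul_const δ).eventually_lt_const (by simpa using hδ₁)
  refine le_of_tendsto_of_tendsto h_left h_right (h_small.mono fun N hN ↦ ?_)
  have hN_pos : (0 : ℝ) < N + 1 := by positivity
  have node_lt {k : ℕ} (hk : k ≤ N + 1 + 1) : k / ((N : ℝ) + 1) * δ < 1 := by
    refine lt_of_le_of_lt (mul_le_mul_of_nonneg_right ?_ hδ₀) hN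
    rw [one_add_div hN_pos.ne']
    gcongr
    exact_mod_cast hk
  have telescoped := mul_le_mul_of_forall_mul_succ_le (N := N + 1)
    (f := fun k ↦ f (k / ((N : ℝ) + 1))) (a := fun k ↦ 1 - (k + 1 : ℕ) / ((N : ℝ) + 1) * δ)
    (fun k hk ↦ sub_pos.2 (node_lt (by lia))) fun k hk ↦ by
      have h_two : 2 * ((k + 1 : ℕ) / ((N : ℝ) + 1)) - k / (N + 1) = (k + 2 : ℕ) / (N + 1) := by
        push_cast
        ring
      simpa only [h_two] using hf (k / (N + 1)) ((k + 1 : ℕ) / (N + 1)) (by positivity)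
        (by gcongr; lia) ((div_le_one hN_pos).2 (by exact_mod_cast hk))
        (h_two ▸ node_lt (by lia))
  simpa [add_div, div_self hN_pos.ne'] using telescoped

lemma hasDerivWithinAt_dotProduct_line {ι κ : Type*} [Fintype ι] [Fintype κ]
    {r : (ι → ℝ) → κ → ℝ} {A : Matrix κ ι ℝ} {S : Set (ι → ℝ)} {T : Set ℝ} {x d : ι → ℝ} {t : ℝ}
    (hr : HasFDerivWithinAt r A.mulVecLin.toContinuousLinearMap S (x + t • d))
    (hmaps : Set.MapsTo (fun τ : ℝ ↦ x + τ • d) T S) (w : κ → ℝ) :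
    HasDerivWithinAt (fun τ : ℝ ↦ w ⬝ᵥ r (x + τ • d)) (w ⬝ᵥ A *ᵥ d) T t := by
  have h_line : HasDerivWithinAt (fun τ : ℝ ↦ x + τ • d) d T t := by
    simpa using (((hasDerivAt_id t).smul_const d).const_add x).hasDerivWithinAt
  have h_comp := hasDerivWithinAt_pi.1 (hr.comp_hasDerivWithinAt t h_line hmaps)
  exact HasDerivWithinAt.fun_sum fun i _ ↦ (h_comp i).const_mul (w i)

lemma hasDerivAt_sq_div_one_sub {u : ℝ} (hu : u < 1) :
    HasDerivAt (fun s : ℝ ↦ s ^ 2 / (1 - s)) (1 / (1 - u) ^ 2 - 1) u := by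
  have h_ne : 1 - u ≠ 0 := by linarith
  refine ((hasDerivAt_pow 2 u).fun_div ((hasDerivAt_id' u).const_sub 1) h_ne).congr_deriv ?_
  field_simp
  ring

namespace SelfConcordantOn

variable {n : ℕ} {S : Set (Fin n → ℝ)} {D : (Fin n → ℝ) → Matrix (Fin n) (Fin n) ℝ}
  {x d : Fin n → ℝ}

lemma hnorm_add_le (hSC : SelfConcordantOn S D) (hx : x ∈ S) (hxd : x + d ∈ S)
    (hδ : hnorm (D x) d < 1) (v : Fin n → ℝ) :
    hnorm (D (x + d)) v ≤ hnorm (D x) v / (1 - hnorm (D x) d) := by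
  simpa using hSC x hx (x + d) hxd (by simpa using hδ) v

lemma hnorm_mul_le_backward (hSC : SelfConcordantOn S D) (hseg : segment ℝ x (x + d) ⊆ S)
    {s t : ℝ} (hs : 0 ≤ s) (hst : s ≤ t) (ht : t ≤ 1) (hδ : (2 * t - s) * hnorm (D x) d < 1)
    (v : Fin n → ℝ) :
    hnorm (D (x + s • d)) v * (1 - (2 * t - s) * hnorm (D x) d) ≤
      hnorm (D (x + t • d)) v * (1 - t * hnorm (D x) d) := by
  set δ := hnorm (D x) d
  have ht₀ : 0 ≤ t := hs.trans hst
  have hδ_nonneg : 0 ≤ δ := hnorm_nonneg _ _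
  have htδ : t * δ < 1 := by nlinarith
  have hzs : x + s • d ∈ S := add_smul_mem_of_segment_subset hseg ⟨hs, hst.trans ht⟩
  have hzt : x + t • d ∈ S := add_smul_mem_of_segment_subset hseg ⟨ht₀, ht⟩
  set q := hnorm (D (x + t • d)) d
  have hq : q * (1 - t * δ) ≤ δ := by
    have h_norm : hnorm (D x) (t • d) = t * δ := hnorm_smul_of_nonneg _ ht₀ d
    have h_upper := hSC.hnorm_add_le (hseg (left_mem_segment ℝ x (x + d))) hzt
      (h_norm ▸ htδ) d
    rwa [h_norm, le_div_iff₀ (by linarith)] at h_upper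
  have hq_lt : (t - s) * q < 1 := by
    refine lt_of_mul_lt_mul_right ?_ (by linarith : 0 ≤ 1 - t * δ)
    nlinarith [mul_le_mul_of_nonneg_left hq (sub_nonneg.2 hst)]
  have h_step : hnorm (D (x + s • d)) v * (1 - (t - s) * q) ≤ hnorm (D (x + t • d)) v := by
    have h_diff : x + s • d - (x + t • d) = -((t - s) • d) := by module
    have h_norm : hnorm (D (x + t • d)) (x + s • d - (x + t • d)) = (t - s) * q := by
      rw [h_diff, hnorm_neg, hnorm_smul_of_nonneg _ (sub_nonneg.2 hst)]
    have h_le := hSC _ hzt _ hzs (h_norm ▸ hq_lt) v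
    rwa [h_norm, le_div_iff₀ (by linarith)] at h_le
  calc hnorm (D (x + s • d)) v * (1 - (2 * t - s) * δ)
      ≤ hnorm (D (x + s • d)) v * ((1 - (t - s) * q) * (1 - t * δ)) := by
        refine mul_le_mul_of_nonneg_left ?_ (hnorm_nonneg _ _)
        linarith [mul_le_mul_of_nonneg_left hq (sub_nonneg.2 hst)]
    _ ≤ hnorm (D (x + t • d)) v * (1 - t * δ) := by
        rw [← mul_assoc]
        exact mul_le_mul_of_nonneg_right h_step (by linarith)

lemma hnorm_mul_one_sub_le (hSC : SelfConcordantOn S D) (hseg : segment ℝ x (x + d) ⊆ S)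
    (hδ : hnorm (D x) d < 1) (v : Fin n → ℝ) :
    hnorm (D x) v * (1 - hnorm (D x) d) ≤ hnorm (D (x + d)) v := by
  simpa using mul_one_sub_le_of_backward_step (f := fun t ↦ hnorm (D (x + t • d)) v)
    (hnorm_nonneg _ _) hδ
    fun s t hs hst ht hlt ↦ hSC.hnorm_mul_le_backward hseg hs hst ht hlt v

lemma abs_hnorm_sq_sub_hnorm_sq_le (hSC : SelfConcordantOn S D)
    (hseg : segment ℝ x (x + d) ⊆ S) (hδ : hnorm (D x) d < 1) (v : Fin n → ℝ) :
    |hnorm (D (x + d)) v ^ 2 - hnorm (D x) v ^ 2| ≤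
      (1 / (1 - hnorm (D x) d) ^ 2 - 1) * hnorm (D x) v ^ 2 := by
  have h_pos : 0 < 1 - hnorm (D x) d := by linarith
  have h_upper := pow_le_pow_left₀ (hnorm_nonneg _ _) (hSC.hnorm_add_le
    (hseg (left_mem_segment ℝ x (x + d))) (hseg (right_mem_segment ℝ x (x + d))) hδ v) 2
  have h_lower := pow_le_pow_left₀ (mul_nonneg (hnorm_nonneg _ _) h_pos.le)
    (hSC.hnorm_mul_one_sub_le hseg hδ v) 2
  rw [div_pow, div_eq_mul_one_div] at h_upper
  rw [mul_pow] at h_lower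
  have h_two_le := two_le_add_one_div (pow_pos h_pos 2)
  rw [abs_le]
  constructor <;> linarith [mul_le_mul_of_nonneg_left h_two_le (sq_nonneg (hnorm (D x) v))]

lemma dotProduct_sub_mulVec_le (hSC : SelfConcordantOn S D) (hPD : ∀ z ∈ S, (D z).PosDef)
    (hseg : segment ℝ x (x + d) ⊆ S) (hδ : hnorm (D x) d < 1) (u v : Fin n → ℝ) :
    u ⬝ᵥ (D (x + d) - D x) *ᵥ v ≤
      (1 / (1 - hnorm (D x) d) ^ 2 - 1) * (hnorm (D x) u * hnorm (D x) v) := by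
  have hx := hPD x (hseg (left_mem_segment ℝ x (x + d)))
  have hz := hPD (x + d) (hseg (right_mem_segment ℝ x (x + d)))
  refine dotProduct_mulVec_le_of_abs_le hx
    (isHermitian_iff_isSymm.1 (hz.isHermitian.sub hx.isHermitian)) (fun w ↦ ?_) u v
  rw [sub_mulVec, dotProduct_sub, ← hnorm_sq hz.posSemidef, ← hnorm_sq hx.posSemidef]
  exact hSC.abs_hnorm_sq_sub_hnorm_sq_le hseg hδ w

theorem dotProduct_linearApprox_error_le (hSC : SelfConcordantOn S D)
    (hPD : ∀ z ∈ S, (D z).PosDef) {r : (Fin n → ℝ) → Fin n → ℝ}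
    (hr : ∀ z ∈ S, HasFDerivWithinAt r (D z).mulVecLin.toContinuousLinearMap S z)
    (hseg : segment ℝ x (x + d) ⊆ S) (hδ : hnorm (D x) d < 1) (w : Fin n → ℝ) :
    w ⬝ᵥ (r (x + d) - r x - D x *ᵥ d) ≤
      hnorm (D x) w * (hnorm (D x) d ^ 2 / (1 - hnorm (D x) d)) := by
  set δ := hnorm (D x) d
  have hδ_nonneg : 0 ≤ δ := hnorm_nonneg _ _
  have h_deriv_error (t : ℝ) (ht : t ∈ Set.Icc (0 : ℝ) 1) : HasDerivWithinAt
      (fun τ ↦ w ⬝ᵥ r (x + τ • d) - τ * (w ⬝ᵥ D x *ᵥ d))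
      (w ⬝ᵥ D (x + t • d) *ᵥ d - w ⬝ᵥ D x *ᵥ d) (Set.Icc 0 1) t :=
    (hasDerivWithinAt_dotProduct_line (hr _ (add_smul_mem_of_segment_subset hseg ht))
      (fun _ ↦ add_smul_mem_of_segment_subset hseg) w).fun_sub
      (hasDerivAt_mul_const (w ⬝ᵥ D x *ᵥ d)).hasDerivWithinAt
  have h_deriv_bound (t : ℝ) (ht : t ∈ Set.Icc (0 : ℝ) 1) : HasDerivAt
      (fun τ ↦ w ⬝ᵥ r x + hnorm (D x) w * ((τ * δ) ^ 2 / (1 - τ * δ)))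
      (hnorm (D x) w * ((1 / (1 - t * δ) ^ 2 - 1) * δ)) t :=
    (((hasDerivAt_sq_div_one_sub (by nlinarith [ht.2] : t * δ < 1)).comp t
      (hasDerivAt_mul_const δ)).const_mul _).const_add _
  have h_deriv_le (t : ℝ) (ht : t ∈ Set.Icc (0 : ℝ) 1) :
      w ⬝ᵥ D (x + t • d) *ᵥ d - w ⬝ᵥ D x *ᵥ d ≤
        hnorm (D x) w * ((1 / (1 - t * δ) ^ 2 - 1) * δ) := by
    have h_norm : hnorm (D x) (t • d) = t * δ := hnorm_smul_of_nonneg _ ht.1 d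
    have h_le := hSC.dotProduct_sub_mulVec_le hPD (segment_add_smul_subset hseg ht)
      (by nlinarith [ht.2]) w d
    rw [h_norm, sub_mulVec, dotProduct_sub] at h_le
    linarith
  have h_one := image_le_of_deriv_right_le_deriv_boundary
    (fun t ht ↦ (h_deriv_error t ht).continuousWithinAt)
    (fun t ht ↦ (h_deriv_error t (Set.Ico_subset_Icc_self ht)).mono_of_mem_nhdsWithin
      (Icc_mem_nhdsGE_of_mem ht))
    (by simp) (fun t ht ↦ (h_deriv_bound t ht).continuousAt.continuousWithinAt)
    (fun t ht ↦ (h_deriv_bound t (Set.Ico_subset_Icc_self ht)).hasDerivWithinAt)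
    (fun t ht ↦ h_deriv_le t (Set.Ico_subset_Icc_self ht)) (Set.right_mem_Icc.2 zero_le_one)
  simp only [one_smul, one_mul] at h_one
  rw [dotProduct_sub, dotProduct_sub]
  linarith

end SelfConcordantOn

/-- The Newton step `n(y) = -D(y)⁻¹ r(y)` for the equation `r = 0`, where `D` is the derivative
of `r`. -/
noncomputable def newtonStep {ι : Type*} [Fintype ι] [DecidableEq ι]
    (D : (ι → ℝ) → Matrix ι ι ℝ) (r : (ι → ℝ) → ι → ℝ) (y : ι → ℝ) : ι → ℝ :=
  -((D y)⁻¹ *ᵥ r y)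

lemma mulVec_newtonStep {ι : Type*} [Fintype ι] [DecidableEq ι] {D : (ι → ℝ) → Matrix ι ι ℝ}
    {r : (ι → ℝ) → ι → ℝ} {y : ι → ℝ} (hD : IsUnit (D y).det) :
    D y *ᵥ newtonStep D r y = -r y := by
  rw [newtonStep, mulVec_neg, mulVec_mulVec, mul_nonsing_inv _ hD, one_mulVec]

lemma div_one_sub_sq_le_div_one_sub_sq {a b : ℝ} (ha : 0 ≤ a) (hab : a ≤ b) (hb : b < 1) :
    (a / (1 - a)) ^ 2 ≤ (b / (1 - b)) ^ 2 := by
  have : 0 ≤ b := ha.trans hab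
  have : 0 < 1 - a := by linarith
  have : 0 < 1 - b := by linarith
  gcongr

theorem stmt_4_general {n : ℕ} {S : Set (Fin n → ℝ)}
    {D : (Fin n → ℝ) → Matrix (Fin n) (Fin n) ℝ} (hPD : ∀ z ∈ S, (D z).PosDef)
    (hSC : SelfConcordantOn S D) {r : (Fin n → ℝ) → Fin n → ℝ}
    (hr : ∀ z ∈ S, HasFDerivWithinAt r (D z).mulVecLin.toContinuousLinearMap S z)
    {y : Fin n → ℝ} (hδ : hnorm (D y) (newtonStep D r y) < 1)
    (hseg : segment ℝ y (y + newtonStep D r y) ⊆ S) :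
    hnorm (D (y + newtonStep D r y)) (newtonStep D r (y + newtonStep D r y)) ≤
      (hnorm (D y) (newtonStep D r y) / (1 - hnorm (D y) (newtonStep D r y))) ^ 2 := by
  set d := newtonStep D r y
  set z := y + d
  set δ := hnorm (D y) d
  set p := hnorm (D z) (newtonStep D r z)
  have hPDy := hPD y (hseg (left_mem_segment ℝ y z))
  have hPDz := hPD z (hseg (right_mem_segment ℝ y z))
  have hδ_pos : 0 < 1 - δ := by linarith
  have hy_newton : r z - r y - D y *ᵥ d = r z := by
    rw [mulVec_newtonStep hPDy.det_pos.ne'.isUnit, sub_neg_eq_add, sub_add_cancel]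
  have hp_sq : p ^ 2 = -newtonStep D r z ⬝ᵥ r z := by
    rw [hnorm_sq hPDz.posSemidef, mulVec_newtonStep hPDz.det_pos.ne'.isUnit, dotProduct_neg,
      neg_dotProduct]
  have h_lower : hnorm (D y) (newtonStep D r z) ≤ p / (1 - δ) :=
    (le_div_iff₀ hδ_pos).2 (hSC.hnorm_mul_one_sub_le hseg hδ _)
  have hp_sq_le : p * p ≤ p * (δ / (1 - δ)) ^ 2 := by
    calc p * p = -newtonStep D r z ⬝ᵥ (r z - r y - D y *ᵥ d) := by rw [← sq, hp_sq, hy_newton]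
      _ ≤ hnorm (D y) (newtonStep D r z) * (δ ^ 2 / (1 - δ)) := by
        simpa only [hnorm_neg] using
          hSC.dotProduct_linearApprox_error_le hPD hr hseg hδ (-newtonStep D r z)
      _ ≤ p / (1 - δ) * (δ ^ 2 / (1 - δ)) := by gcongr
      _ = p * (δ / (1 - δ)) ^ 2 := by ring
  rcases (hnorm_nonneg (D z) (newtonStep D r z)).eq_or_lt with hp_zero | hp_pos
  · exact hp_zero.symm.le.trans (sq_nonneg _)
  · exact le_of_mul_le_mul_left hp_sq_le hp_pos

theorem stmt_4 {n : ℕ} (S : Set (Fin n → ℝ)) (hS : Convex ℝ S)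
    (D : (Fin n → ℝ) → Matrix (Fin n) (Fin n) ℝ)
    (hPD : ∀ y ∈ S, (D y).PosDef)
    (hSC : SelfConcordantOn S D)
    (r : (Fin n → ℝ) → (Fin n → ℝ))
    (hr : ∀ z ∈ S,
      HasFDerivWithinAt r ((D z).mulVecLin.toContinuousLinearMap) S z)
    (y : Fin n → ℝ) (hy : y ∈ S)
    -- `n(y) := −D(y)⁻¹ r(y)`, `y⁺ := y + n(y)`, `δ := ‖n(y)‖_{D(y)}`
    (hδ : hnorm (D y) (-(D y)⁻¹.mulVec (r y)) ≤ 1/4)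
    (hseg : segment ℝ y (y + -(D y)⁻¹.mulVec (r y)) ⊆ S) :
    hnorm (D (y + -(D y)⁻¹.mulVec (r y)))
        (-(D (y + -(D y)⁻¹.mulVec (r y)))⁻¹.mulVec (r (y + -(D y)⁻¹.mulVec (r y)))) ≤
      1 / 9 := by
  refine (stmt_4_general hPD hSC hr (hδ.trans_lt (by norm_num)) hseg).trans ?_
  exact (div_one_sub_sq_le_div_one_sub_sq (hnorm_nonneg _ _) hδ (by norm_num)).trans_eq
    (by norm_num)
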